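/- arXiv:1512.05122 — 7 statements merged into one kernel-verified Lean document; each statement's English description precedes it below -/
import Mathlib

section
/- For all ordinals α, β, γ < ε₀ and all natural numbers n, x: if α ↘ₙˣ γ and α ↘ₙ β with β ≥ γ, then β ↘ₙˣ γ. -/
/-!
One step of the fundamental sequence never increases the denoted ordinal (`repr_fs_le`), so the
sequence `y ↦ fund α n y` is antitone. Let `γ = fund α n y` with `y ≤ x` and `β = fund α n z`.
If `z ≤ y`, then `β` reaches `γ` in `y - z ≤ x` steps. If `y ≤ z`, then `β ≤ γ`, so `β = γ`,
since normal forms are determined by the ordinal they denote, and zero steps suffice.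
-/

namespace Paper

/-- `pred? o = some β` when the notation `o` denotes a successor ordinal `β + 1`;
`pred? o = none` when `o` denotes `0` or a limit ordinal. -/
def pred? : ONote → Option ONote
  | ONote.zero => none
  | ONote.oadd e m a =>
    match a with
    | ONote.oadd e' m' a' => (pred? (ONote.oadd e' m' a')).map (ONote.oadd e m)
    | ONote.zero => if e = 0 then some (ONote.ofNat ((m : ℕ) - 1)) else none

/-- The fundamental sequence: `fs α n` is `{α}(n)`.  We have `{0}(n) = 0`,
`{β+1}(n) = β`, `{γ + ω^(δ+1)}(n) = γ + ω^δ·(n+1)` and `{γ + ω^δ}(n) = γ + ω^({δ}(n))`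
for `δ` a limit. -/
def fs : ONote → ℕ → ONote
  | ONote.zero, _ => ONote.zero
  | ONote.oadd e m a, n =>
    match a with
    | ONote.oadd e' m' a' => ONote.oadd e m (fs (ONote.oadd e' m' a') n)
    | ONote.zero =>
      match e with
      | ONote.zero => ONote.ofNat ((m : ℕ) - 1)
      | ONote.oadd e1 m1 a1 =>
        let tail : ONote :=
          match pred? (ONote.oadd e1 m1 a1) with
          | some p => ONote.oadd p ⟨n + 1, n.succ_pos⟩ ONote.zero
          | none => ONote.oadd (fs (ONote.oadd e1 m1 a1) n) 1 ONote.zero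
        if (m : ℕ) = 1 then tail
        else ONote.oadd (ONote.oadd e1 m1 a1) ⟨max ((m : ℕ) - 1) 1, by omega⟩ tail

/-- Iteration of the fundamental sequence: `fund α n x` applies `{·}(n)` to `α`, `x` times. -/
def fund (α : ONote) (n : ℕ) : ℕ → ONote
  | 0 => α
  | x + 1 => fs (fund α n x) n

/-- `StepAt α n x β` expresses `α ↘ₙˣ β`: some `y ≤ x` has `fund α n y = β`. -/
def StepAt (α : ONote) (n x : ℕ) (β : ONote) : Prop :=
  ∃ y ≤ x, fund α n y = β

/-- `Step α n β` expresses `α ↘ₙ β`. -/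
def Step (α : ONote) (n : ℕ) (β : ONote) : Prop :=
  ∃ x, StepAt α n x β


/-- This holds without normal form: `repr` is defined for every notation. -/
theorem repr_pred? (o p : ONote) (h : pred? o = some p) : o.repr = p.repr + 1 := by
  induction o generalizing p with
  | zero => simp [pred?] at h
  | oadd e m a _ iha =>
    cases a with
    | zero =>
      rw [pred?] at h
      split_ifs at h with he
      obtain rfl := Option.some.inj h
      subst he
      have hm : (((m : ℕ) - 1 : ℕ) : Ordinal) + 1 = ((m : ℕ) : Ordinal) := by
        have := m.pos
        exact_mod_cast (by omega : (m : ℕ) - 1 + 1 = m)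
      rw [ONote.repr_ofNat, hm]
      simp [ONote.repr]
    | oadd e' m' a' =>
      rw [pred?] at h
      obtain ⟨q, hq, rfl⟩ := Option.map_eq_some_iff.1 h
      rw [ONote.repr, iha q hq, ONote.repr, add_assoc]

/-- A step of the fundamental sequence does not increase the denoted ordinal, even for notations
that are not in normal form. -/
theorem repr_fs_le (o : ONote) (n : ℕ) : (fs o n).repr ≤ o.repr := by
  induction o with
  | zero => simp [fs]
  | oadd e m a ihe iha =>
    cases a with
    | oadd e' m' a' =>
      rw [fs, ONote.repr, ONote.repr.eq_2 e]
      gcongr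
    | zero =>
      cases e with
      | zero =>
        have : (((m : ℕ) - 1 : ℕ) : Ordinal) ≤ ((m : ℕ) : Ordinal) := by
          exact_mod_cast Nat.sub_le _ _
        simpa [fs, ONote.repr] using this
      | oadd e1 m1 a1 =>
        rw [fs]
        generalize hE : ONote.oadd e1 m1 a1 = E at *
        -- The last summand `ω ^ E` may be replaced by anything it dominates.
        have key : ∀ tail : ONote, tail.repr ≤ Ordinal.omega0 ^ E.repr →
            (if (m : ℕ) = 1 then tail else
              ONote.oadd E ⟨max ((m : ℕ) - 1) 1, by omega⟩ tail).repr ≤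
              (ONote.oadd E m ONote.zero).repr := by
          intro tail htail
          split_ifs with hm
          · simpa [ONote.repr, hm] using htail
          · have hpos := m.pos
            have hm' : (((max ((m : ℕ) - 1) 1 : ℕ)) : Ordinal) + 1 = ((m : ℕ) : Ordinal) := by
              exact_mod_cast (by omega : max ((m : ℕ) - 1) 1 + 1 = (m : ℕ))
            simp only [ONote.repr, PNat.mk_coe, add_zero]
            rw [← hm', mul_add, mul_one]
            gcongr
        apply key
        cases hp : pred? E with
        | some p =>
          simp only [ONote.repr, repr_pred? E p hp, PNat.mk_coe, add_zero]
          rw [Ordinal.opow_add, Ordinal.opow_one]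
          gcongr
          exact (Ordinal.natCast_lt_omega0 _).le
        | none =>
          simpa [ONote.repr] using
            Ordinal.opow_le_opow_right Ordinal.omega0_pos ihe

theorem repr_fund_antitone (α : ONote) (n : ℕ) : Antitone fun y => (fund α n y).repr :=
  antitone_nat_of_succ_le fun _ => repr_fs_le _ n

theorem fund_add (α : ONote) (n z k : ℕ) : fund α n (z + k) = fund (fund α n z) n k := by
  induction k with
  | zero => rfl
  | succ k ih => rw [← add_assoc, fund, fund, ih]

/-- If `α ↘ₙˣ γ` and `α ↘ₙ β` with `β ≥ γ`, then `β ↘ₙˣ γ`. -/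
theorem stepAt_through (α β γ : ONote) (hα : α.NF) (hβ : β.NF) (hγ : γ.NF)
    (n x : ℕ) (h1 : StepAt α n x γ) (h2 : Step α n β) (h3 : γ ≤ β) :
    StepAt β n x γ := by
  obtain ⟨y, hy, rfl⟩ := h1
  obtain ⟨_, z, _, rfl⟩ := h2
  rcases le_total z y with hzy | hyz
  · refine ⟨y - z, by omega, ?_⟩
    rw [← fund_add, Nat.add_sub_cancel' hzy]
  · refine ⟨0, Nat.zero_le x, ?_⟩
    rw [fund]
    exact ONote.repr_inj.1 (le_antisymm (repr_fund_antitone α n hyz) (ONote.le_def.1 h3))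

end Paper
end

section
/- Assume the ordinal α meshes with the ordinal β. Then for all ordinals γ < ε₀ and all natural numbers n, x: β ↘ₙˣ γ if and only if α+β ↘ₙˣ α+γ. -/
/-!
The fundamental sequence only alters the last summand of a Cantor normal form.  If `α` meshes
with `β ≠ 0`, then the summands of `α` survive in `α + β`, except that the last summand of `α` may
merge with the first summand of `β`; hence `{α+β}(n) = α + {β}(n)` (`fs_add`).  Since
`{β}(n) < β` (`fs_nf_lt`), meshing is preserved, so the sequences of iterates started at `β` and at
`α + β` run in parallel until the former reaches `0`.  From then on the former stays at `0`, while
the latter, having reached `α`, drops strictly below `α` if `α ≠ 0` and so never again has the form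
`α + γ`; for `α = 0` both sequences coincide.  Left cancellation of ordinal addition yields the equivalence.
-/

namespace Paper

/-- The smallest exponent in the Cantor normal form of a notation. -/
def lastExp : ONote → ONote
  | ONote.zero => ONote.zero
  | ONote.oadd e _ ONote.zero => e
  | ONote.oadd _ _ (ONote.oadd e' m' a') => lastExp (ONote.oadd e' m' a')

/-- `α` meshes with `γ` if `α = 0`, or `γ < ω^(α₀+1)` where `α₀` is the smallest
exponent in the Cantor normal form of `α`. -/
def Meshes (α γ : ONote) : Prop :=
  α = 0 ∨ γ < ONote.oadd (lastExp α + 1) 1 0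

open ONote

/-! ### The fundamental sequence on normal forms -/

lemma fs_oadd_of_ne_zero (e : ONote) (m : ℕ+) {a : ONote} (ha : a ≠ 0) (n : ℕ) :
    fs (oadd e m a) n = oadd e m (fs a n) := by
  cases a with
  | zero => exact absurd rfl ha
  | oadd e' m' a' => simp [fs]

/-- Only one copy of a repeated last summand `ω ^ e` is changed. For `e = 0` this uses that
`fs 1 n = 0`. -/
lemma fs_oadd_succ (e : ONote) (m : ℕ+) (n : ℕ) :
    fs (oadd e (m + 1) 0) n = oadd e m (fs (oadd e 1 0) n) := by
  have hm : (m : ℕ) ≠ 0 := m.ne_zero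
  cases e with
  | zero =>
    obtain ⟨k, rfl⟩ : ∃ k : ℕ, m = k.succPNat := ⟨m.natPred, (PNat.succPNat_natPred m).symm⟩
    simp [fs, ← ONote.zero_def]
  | oadd e1 m1 a1 =>
    have h : max (m : ℕ) 1 = m := by have := m.pos; omega
    simp only [fs, PNat.add_coe, PNat.one_coe, Nat.add_eq_right, hm, if_false,
      if_true, Nat.add_sub_cancel, h]
    rfl

lemma pred?_nf_lt (o p : ONote) (ho : o.NF) (h : pred? o = some p) : p.NF ∧ p < o := by
  induction o generalizing p with
  | zero => simp [pred?] at h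
  | oadd e m a _ iha =>
    cases a with
    | zero =>
      rw [pred?] at h
      split_ifs at h with he
      obtain rfl : ONote.ofNat ((m : ℕ) - 1) = p := by simpa using h
      refine ⟨inferInstance, ?_⟩
      subst he
      have hlt : (m : ℕ) - 1 < m := Nat.sub_lt m.pos one_pos
      have hc : (((m : ℕ) - 1 : ℕ) : Ordinal.{0}) < ((m : ℕ) : Ordinal.{0}) := Nat.cast_lt.2 hlt
      rw [ONote.lt_def, ONote.repr_ofNat]
      simpa [-Ordinal.natCast_sub, -Nat.cast_lt] using hc
    | oadd e' m' a' =>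
      simp only [pred?, Option.map_eq_some_iff] at h
      obtain ⟨q, hq, rfl⟩ := h
      obtain ⟨hq1, hq2⟩ := iha q ho.snd hq
      exact ⟨ho.fst.oadd m (hq1.below_of_lt' (lt_trans hq2 ho.snd'.repr_lt)), oadd_lt_oadd_3 hq2⟩

/-- The fundamental sequence of `ω ^ e` stays below `ω ^ e`, provided that of `e` descends. -/
lemma fs_omega_pow_below (e : ONote) (he : e.NF) (n : ℕ)
    (ih : e ≠ 0 → (fs e n).NF ∧ fs e n < e) :
    (fs (oadd e 1 0) n).NFBelow (ONote.repr e) := by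
  cases e with
  | zero => exact NFBelow.zero
  | oadd e1 m1 a1 =>
    obtain ⟨h1, h2⟩ := ih (by simp [← ONote.zero_def])
    simp only [fs, PNat.one_coe, if_true]
    cases hp : pred? (oadd e1 m1 a1) with
    | none => exact NFBelow.oadd h1 NFBelow.zero h2
    | some p =>
      obtain ⟨hp1, hp2⟩ := pred?_nf_lt _ _ he hp
      exact NFBelow.oadd hp1 NFBelow.zero hp2

lemma fs_nf_lt (o : ONote) (ho : o.NF) (h0 : o ≠ 0) (n : ℕ) : (fs o n).NF ∧ fs o n < o := by
  induction o with
  | zero => exact absurd rfl h0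
  | oadd e m a ihe iha =>
    by_cases ha : a = 0
    · subst ha
      have hT := fs_omega_pow_below e ho.fst n (ihe ho.fst)
      induction m using PNat.recOn with
      | one =>
        refine ⟨⟨⟨_, hT⟩⟩, ?_⟩
        rw [ONote.lt_def]
        simpa using hT.repr_lt
      | succ k _ =>
        rw [fs_oadd_succ]
        have hk : (oadd e k (fs (oadd e 1 0) n)).NF := ho.fst.oadd k hT
        exact ⟨hk, oadd_lt_oadd_2 hk (by simp)⟩
    · rw [fs_oadd_of_ne_zero e m ha]
      obtain ⟨h1, h2⟩ := iha ho.snd ha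
      exact ⟨ho.fst.oadd m (h1.below_of_lt' (lt_trans h2 ho.snd'.repr_lt)), oadd_lt_oadd_3 h2⟩

lemma fs_nf (o : ONote) (ho : o.NF) (n : ℕ) : (fs o n).NF := by
  by_cases h0 : o = 0
  · subst h0; exact NF.zero
  · exact (fs_nf_lt o ho h0 n).1

lemma fs_le (o : ONote) (ho : o.NF) (n : ℕ) : fs o n ≤ o := by
  by_cases h0 : o = 0
  · subst h0; exact le_rfl
  · exact (fs_nf_lt o ho h0 n).2.le

lemma fund_nf (o : ONote) (ho : o.NF) (n x : ℕ) : (fund o n x).NF := by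
  induction x with
  | zero => exact ho
  | succ x ih => exact fs_nf _ ih n

/-! ### Addition of meshing notations -/

lemma addAux_of_below {e o : ONote} (m : ℕ+) (he : e.NF) (ho : o.NFBelow (ONote.repr e)) :
    addAux e m o = oadd e m o := by
  cases o with
  | zero => rfl
  | oadd e' m' a' =>
    have := ho.fst
    have hc : ONote.cmp e e' = Ordering.gt := (cmp_compares e e').eq_gt.2 ho.lt
    simp [addAux, hc]

lemma addAux_same {e : ONote} (m k : ℕ+) (o : ONote) (he : e.NF) :
    addAux e m (oadd e k o) = oadd e (m + k) o := by
  have hc : ONote.cmp e e = Ordering.eq := (cmp_compares e e).eq_eq.2 rfl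
  simp [addAux, hc]

lemma add_zero' (α : ONote) (hα : α.NF) : α + 0 = α := by
  rw [← repr_inj, repr_add]
  simp

/-- The smallest exponent of a normal form inherits its bound. -/
lemma lastExp_nf_lt (a : ONote) (ha0 : a ≠ 0) (b : Ordinal) (h : a.NFBelow b) :
    (lastExp a).NF ∧ ONote.repr (lastExp a) < b := by
  induction a generalizing b with
  | zero => exact absurd rfl ha0
  | oadd e m a _ iha =>
    cases a with
    | zero => exact ⟨h.fst, h.lt⟩
    | oadd e' m' a' =>
      obtain ⟨h1, h2⟩ := iha (by simp [← ONote.zero_def]) _ h.snd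
      exact ⟨h1, h2.trans h.lt⟩

lemma lt_oadd_add_one_iff {β e : ONote} (he : e.NF) :
    β < oadd (e + 1) 1 0 ↔ ONote.repr β < Ordinal.omega0 ^ (ONote.repr e + 1) := by
  rw [ONote.lt_def]
  simp

/-- A single summand `ω ^ e * m` commutes with the fundamental sequence of `β`. If `β` also starts
with exponent `e`, the two leading summands merge. -/
lemma fs_add_single (e : ONote) (m : ℕ+) (β : ONote) (he : e.NF) (hβ : β.NF) (hβ0 : β ≠ 0)
    (hlt : ONote.repr β < Ordinal.omega0 ^ (ONote.repr e + 1)) (n : ℕ) :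
    fs (oadd e m 0 + β) n = oadd e m 0 + fs β n := by
  simp only [oadd_add, ONote.zero_add]
  rcases lt_or_ge (ONote.repr β) (Ordinal.omega0 ^ ONote.repr e) with hl | hge
  · have hb := hβ.below_of_lt' hl
    obtain ⟨h1, h2⟩ := fs_nf_lt β hβ hβ0 n
    rw [addAux_of_below m he hb, fs_oadd_of_ne_zero e m hβ0,
      addAux_of_below m he (h1.below_of_lt' (lt_trans h2 hl))]
  · cases β with
    | zero => exact absurd rfl hβ0
    | oadd e' m' b =>
      have he' := hβ.fst
      have hee : e' = e := by
        rw [← repr_inj]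
        refine le_antisymm (Order.lt_add_one_iff.1 (hβ.below_of_lt' hlt).lt) ?_
        by_contra hcon
        exact absurd (hβ.below_of_lt (not_le.1 hcon)).repr_lt (not_lt.2 hge)
      subst hee
      rw [addAux_same m m' b he]
      by_cases hb : b = 0
      · subst hb
        have hT := fs_omega_pow_below e' he n (fun h => fs_nf_lt e' he h n)
        induction m' using PNat.recOn with
        | one => rw [fs_oadd_succ, addAux_of_below m he hT]
        | succ k _ => rw [← add_assoc, fs_oadd_succ, fs_oadd_succ, addAux_same m k _ he]
      · rw [fs_oadd_of_ne_zero _ _ hb, fs_oadd_of_ne_zero _ _ hb, addAux_same m m' _ he]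

lemma fs_add (α β : ONote) (hα : α.NF) (hβ : β.NF) (hβ0 : β ≠ 0) (hm : Meshes α β) (n : ℕ) :
    fs (α + β) n = α + fs β n := by
  induction α with
  | zero => rfl
  | oadd e m a _ iha =>
    have he := hα.fst
    have hlt : β < oadd (lastExp (oadd e m a) + 1) 1 0 := by
      rcases hm with h | h
      · simp [← ONote.zero_def] at h
      · exact h
    by_cases ha : a = 0
    · subst ha
      exact fs_add_single e m β he hβ hβ0 ((lt_oadd_add_one_iff he).1 hlt) n
    · have hl : lastExp (oadd e m a) = lastExp a := by
        cases a with
        | zero => exact absurd rfl ha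
        | oadd e' m' a' => rfl
      rw [hl] at hlt
      -- The last exponent of `a` lies below `e`, so `β < ω ^ e`.
      obtain ⟨hl1, hl2⟩ := lastExp_nf_lt a ha _ hα.snd'
      have hβe : ONote.repr β < Ordinal.omega0 ^ ONote.repr e :=
        ((lt_oadd_add_one_iff hl1).1 hlt).trans_le
          (Ordinal.opow_le_opow_right Ordinal.omega0_pos (Order.add_one_le_of_lt hl2))
      obtain ⟨h1, h2⟩ := fs_nf_lt β hβ hβ0 n
      have hc0 : a + β ≠ 0 := by
        have := hα.snd
        intro h
        have h' := congrArg ONote.repr h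
        rw [repr_add, repr_zero] at h'
        have ha' : ONote.repr a = 0 := le_antisymm (le_self_add.trans h'.le) zero_le
        exact ha (repr_inj.1 (ha'.trans repr_zero.symm))
      rw [oadd_add, oadd_add,
        addAux_of_below m he (add_nfBelow hα.snd' (hβ.below_of_lt' hβe)),
        fs_oadd_of_ne_zero e m hc0, iha hα.snd (Or.inr hlt),
        addAux_of_below m he (add_nfBelow hα.snd' (h1.below_of_lt' (lt_trans h2 hβe)))]

/-! ### Iteration -/

lemma Meshes.mono {α β γ : ONote} (h : Meshes α β) (hγ : γ ≤ β) : Meshes α γ :=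
  h.imp id (lt_of_le_of_lt hγ)

lemma fund_meshes {α β : ONote} (hβ : β.NF) (hm : Meshes α β) (n y : ℕ) :
    Meshes α (fund β n y) := by
  induction y with
  | zero => exact hm
  | succ y ih => exact ih.mono (fs_le _ (fund_nf β hβ n y) n)

/-- Every iterate of `β` is matched by an iterate of `α + β` that is not later. It may be strictly
earlier, since the iterates of `β` remain at `0`. -/
lemma exists_fund_add_eq {α β : ONote} (hα : α.NF) (hβ : β.NF) (hm : Meshes α β) (n y : ℕ) :
    ∃ z ≤ y, fund (α + β) n z = α + fund β n y := by
  induction y with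
  | zero => exact ⟨0, le_rfl, rfl⟩
  | succ y ih =>
    obtain ⟨z, hz, h⟩ := ih
    by_cases h0 : fund β n y = 0
    · refine ⟨z, by omega, ?_⟩
      rw [h, fund, h0]
      rfl
    · refine ⟨z + 1, by omega, ?_⟩
      rw [fund, h, fs_add α _ hα (fund_nf β hβ n y) h0 (fund_meshes hβ hm n y), fund]

/-- The iterates of `α + β` follow those of `β` until they fall below `α`. -/
lemma fund_add_eq_or_lt {α β : ONote} (hα : α.NF) (hβ : β.NF) (hm : Meshes α β) (n y : ℕ) :
    fund (α + β) n y = α + fund β n y ∨ fund (α + β) n y < α := by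
  induction y with
  | zero => exact Or.inl rfl
  | succ y ih =>
    rcases ih with h | h
    · by_cases h0 : fund β n y = 0
      · by_cases hα0 : α = 0
        · subst hα0
          exact Or.inl rfl
        · right
          rw [fund, h, h0, add_zero' α hα]
          exact (fs_nf_lt α hα hα0 n).2
      · left
        rw [fund, h, fs_add α _ hα (fund_nf β hβ n y) h0 (fund_meshes hβ hm n y), fund]
    · exact Or.inr (lt_of_le_of_lt (fs_le _ (fund_nf _ (add_nf α β) n y) n) h)

/-- If `α` meshes with `β` then `β ↘ₙˣ γ` iff `α+β ↘ₙˣ α+γ`. -/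
theorem stepAt_add_iff (α β γ : ONote) (hα : α.NF) (hβ : β.NF) (hγ : γ.NF)
    (hm : Meshes α β) (n x : ℕ) :
    StepAt β n x γ ↔ StepAt (α + β) n x (α + γ) := by
  constructor
  · rintro ⟨y, hy, rfl⟩
    obtain ⟨z, hz, h⟩ := exists_fund_add_eq hα hβ hm n y
    exact ⟨z, hz.trans hy, h⟩
  · rintro ⟨y, hy, h⟩
    refine ⟨y, hy, ?_⟩
    have := fund_nf β hβ n y
    rcases fund_add_eq_or_lt hα hβ hm n y with h' | h'
    · have h2 := congrArg ONote.repr (h'.symm.trans h)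
      rw [repr_add, repr_add] at h2
      exact repr_inj.1 (add_left_cancel h2)
    · rw [h, ONote.lt_def, repr_add] at h'
      exact absurd h' (not_lt.2 le_self_add)

end Paper
end

section
/- For every ordinal α < ε₀ and every natural number n we have α ↘ₙ 0, i.e. the iteration of the fundamental sequence at base n starting from α reaches 0 after finitely many steps. -/
/-!
On nonzero Cantor normal forms the map `α ↦ {α}(n)` stays among normal forms and strictly
decreases the denoted ordinal (`fs_lt`). Since the ordinals are well-founded, iterating it
must reach `0`. The descent is proved by induction on the notation: the only summand that changes
is the last one, `ω^e`. It disappears if `e = 0`; otherwise it becomes `ω^d·k` with `d < e`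
(`replace_last_lt`), where `d` is the predecessor of `e` (`pred?_lt`) or, for `e` a limit,
`{e}(n)` (induction hypothesis).
-/

namespace Paper

theorem pred?_lt (o : ONote) (ho : o.NF) (p : ONote) (h : pred? o = some p) :
    p.NF ∧ p < o := by
  induction o generalizing p with
  | zero => simp [pred?] at h
  | oadd e m a ihe iha =>
    cases a with
    | zero =>
      rw [pred?] at h
      split_ifs at h with he
      obtain rfl := Option.some.inj h
      subst he
      refine ⟨inferInstance, ?_⟩
      rw [ONote.lt_def, ONote.repr_ofNat]
      have hlt : (((m : ℕ) - 1 : ℕ) : Ordinal) < ((m : ℕ) : Ordinal) :=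
        Nat.cast_lt.2 (Nat.sub_lt m.pos one_pos)
      simpa only [ONote.repr, ONote.repr_zero, Ordinal.opow_zero, one_mul, add_zero] using hlt
    | oadd e' m' a' =>
      rw [pred?, Option.map_eq_some_iff] at h
      obtain ⟨q, hq, rfl⟩ := h
      obtain ⟨hqn, hql⟩ := iha ho.snd q hq
      exact ⟨ho.fst.oadd m (ONote.NF.below_of_lt' (lt_trans hql ho.snd'.repr_lt) hqn),
        ONote.oadd_lt_oadd_3 hql⟩

/-- The step from `ω^e·m` when the last summand `ω^e` is replaced by `ω^d·k` with `d < e`;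
this covers both the successor and the limit exponent. -/
theorem replace_last_lt (e d : ONote) (m k : ℕ+) (he : e.NF) (hd : d.NF) (h : d < e)
    (m' : ℕ+) (hm' : (m : ℕ) ≠ 1 → (m' : ℕ) < m) (o : ONote)
    (ho : o = if (m : ℕ) = 1 then ONote.oadd d k ONote.zero
      else ONote.oadd e m' (ONote.oadd d k ONote.zero)) :
    o.NF ∧ o < ONote.oadd e m ONote.zero := by
  have hn : (ONote.oadd d k ONote.zero).NF := ONote.NF.oadd_zero d k
  split_ifs at ho with hm
  · subst ho
    exact ⟨hn, ONote.oadd_lt_oadd_1 hn h⟩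
  · subst ho
    have hn' : (ONote.oadd e m' (ONote.oadd d k ONote.zero)).NF :=
      he.oadd m' (ONote.NF.below_of_lt h hn)
    exact ⟨hn', ONote.oadd_lt_oadd_2 hn' (hm' hm)⟩

/-- The fundamental sequence preserves normal forms and strictly decreases nonzero ones. -/
theorem fs_lt (o : ONote) (ho : o.NF) (n : ℕ) (h0 : o ≠ 0) : (fs o n).NF ∧ fs o n < o := by
  induction o with
  | zero => exact absurd rfl h0
  | oadd e m a ihe iha =>
    cases a with
    | oadd e' m' a' =>
      rw [fs]
      obtain ⟨hqn, hql⟩ := iha ho.snd (by intro h; cases h)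
      exact ⟨ho.fst.oadd m (ONote.NF.below_of_lt' (lt_trans hql ho.snd'.repr_lt) hqn),
        ONote.oadd_lt_oadd_3 hql⟩
    | zero =>
      cases e with
      | zero =>
        -- Here `{m}(n)` is the predecessor of the positive integer `m`, as computed by `pred?`.
        exact pred?_lt _ ho _ rfl
      | oadd e1 m1 a1 =>
        have hm := m.pos
        cases hp : pred? (ONote.oadd e1 m1 a1) with
        | some p =>
          obtain ⟨hpn, hpl⟩ := pred?_lt _ ho.fst p hp
          refine replace_last_lt (ONote.oadd e1 m1 a1) p m ⟨n + 1, n.succ_pos⟩ ho.fst hpn hpl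
            ⟨max ((m : ℕ) - 1) 1, by omega⟩ (fun h => by rw [PNat.mk_coe]; omega) _ ?_
          simp only [fs, hp]
        | none =>
          obtain ⟨hpn, hpl⟩ := ihe ho.fst (by intro h; cases h)
          refine replace_last_lt (ONote.oadd e1 m1 a1) _ m 1 ho.fst hpn hpl
            ⟨max ((m : ℕ) - 1) 1, by omega⟩ (fun h => by rw [PNat.mk_coe]; omega) _ ?_
          rw [fs]
          simp only [hp]

theorem fund_fs (α : ONote) (n x : ℕ) : fund (fs α n) n x = fund α n (x + 1) := by
  induction x with
  | zero => rfl
  | succ x ih => rw [fund, ih]; rfl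

/-- For every `α < ε₀` and every `n` we have `α ↘ₙ 0`. -/
theorem step_to_zero (α : ONote) (hα : α.NF) (n : ℕ) : Step α n 0 := by
  induction α using WellFounded.induction (InvImage.wf ONote.repr Ordinal.lt_wf) with
  | _ α ih =>
    by_cases h0 : α = 0
    · exact ⟨0, 0, le_rfl, h0⟩
    · obtain ⟨hn, hl⟩ := fs_lt α hα n h0
      obtain ⟨x, y, -, hy⟩ := ih (fs α n) hl hn
      exact ⟨y + 1, y + 1, le_rfl, by rw [← fund_fs, hy]⟩

end Paper
end

section
/- For every ordinal α with 0 < α < ε₀ and every natural number n: Num(α,n) > Num({α}(n),n). -/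
/-!
Write `b = n + 2`. Passing from `α` to `{α}(n)` changes only the last summand of `α`. If it is
`ω ^ 0`, it is dropped and the value falls by one. If it is `ω ^ (δ + 1)`, it becomes
`ω ^ δ * (n + 1)`; since `Num (δ + 1) = Num δ + 1` (`num_pred?`), its value `b ^ Num δ * b` falls to
`b ^ Num δ * (b - 1)`. If it is `ω ^ δ` with `δ` a limit, it becomes `ω ^ {δ}(n)`, and the induction
hypothesis for `δ` together with strict monotonicity of `b ^ ·` gives the decrease. Both `fs` and
`num` are computed syntactically, so the induction (`num_fs_lt_of_ne_zero`) covers all notations,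
in normal form or not.
-/

namespace Paper

/-- `num α n` replaces every occurrence of `ω` in the hereditary Cantor normal
form of `α` by the number `n + 2`. -/
def num : ONote → ℕ → ℕ
  | ONote.zero, _ => 0
  | ONote.oadd e m a, n => (n + 2) ^ num e n * (m : ℕ) + num a n

theorem num_ofNat (k n : ℕ) : num (ONote.ofNat k) n = k := by
  cases k <;> simp [ONote.ofNat, num, ← ONote.zero_def]

theorem num_pred? (n : ℕ) : ∀ (o p : ONote), pred? o = some p → num o n = num p n + 1
  | ONote.zero, p, h => by simp [pred?] at h
  | ONote.oadd e m (ONote.oadd e' m' a'), p, h => by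
    rw [pred?, Option.map_eq_some_iff] at h
    obtain ⟨q, hq, rfl⟩ := h
    have ih := num_pred? n _ q hq
    rw [num, ih, num, Nat.add_assoc]
  | ONote.oadd e m ONote.zero, p, h => by
    rw [pred?] at h
    split_ifs at h with he
    subst he
    obtain rfl := Option.some.inj h
    have := m.pos
    rw [num_ofNat, ← ONote.zero_def]
    simp only [num, pow_zero]
    omega

theorem num_fs_lt_of_ne_zero (n : ℕ) : ∀ α : ONote, α ≠ ONote.zero → num (fs α n) n < num α n
  | ONote.zero, h => absurd rfl h
  | ONote.oadd e m (ONote.oadd e' m' a'), _ => by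
    have ih := num_fs_lt_of_ne_zero n (ONote.oadd e' m' a') (by simp)
    rw [fs, num, num]
    exact Nat.add_lt_add_left ih _
  | ONote.oadd ONote.zero m ONote.zero, _ => by
    have := m.pos
    rw [fs, num_ofNat, num, num, pow_zero]
    omega
  | ONote.oadd (ONote.oadd e1 m1 a1) m ONote.zero, _ => by
    have ih := num_fs_lt_of_ne_zero n (ONote.oadd e1 m1 a1) (by simp)
    have hpred := num_pred? n (ONote.oadd e1 m1 a1)
    rw [fs]
    generalize ONote.oadd e1 m1 a1 = e at ih hpred ⊢
    -- The last summand `ω ^ e` is replaced by `tail`, so it suffices that `tail` is smaller.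
    suffices key : ∀ tail : ONote, num tail n < (n + 2) ^ num e n →
        num (if (m : ℕ) = 1 then tail
          else ONote.oadd e ⟨max ((m : ℕ) - 1) 1, by omega⟩ tail) n
          < num (ONote.oadd e m ONote.zero) n by
      refine key _ ?_
      split
      · next p hp =>
        simp only [num, hpred p hp, pow_succ, PNat.mk_coe, Nat.add_zero]
        exact Nat.mul_lt_mul_of_pos_left (by omega) (by positivity)
      · simp only [num, PNat.one_coe, Nat.mul_one, Nat.add_zero]
        exact Nat.pow_lt_pow_right (by omega) ih
    intro tail htail
    have hm := m.pos
    split_ifs with h1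
    · rw [num, num, h1]
      omega
    · obtain ⟨k, hk⟩ : ∃ k, (m : ℕ) = k + 2 := ⟨m - 2, by omega⟩
      simp only [num, PNat.mk_coe, hk, show max (k + 2 - 1) 1 = k + 1 by omega]
      rw [show k + 2 = k + 1 + 1 from rfl, Nat.mul_succ _ (k + 1)]
      omega

/-- For `0 < α < ε₀` we have `Num(α,n) > Num({α}(n),n)`. -/
theorem num_fs_lt (α : ONote) (hα : α.NF) (h0 : 0 < α) (n : ℕ) :
    num (fs α n) n < num α n := by
  refine num_fs_lt_of_ne_zero n α ?_
  rintro rfl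
  exact lt_irrefl _ h0

end Paper
end

section
/- Let p, q, p', q', k be natural numbers. If ω·p+q ↘ₖ ω·p'+q', then either p'=p and q'≤q, or else p'<p and q'≤k+1. -/
/-!
Below `ω²` the fundamental sequences act on pairs `(p, q)` standing for `ω·p + q`:
`(p, q+1) ↦ (p, q)`, `(p+1, 0) ↦ (p, k+1)` and `(0, 0) ↦ (0, 0)` (`fs_wpq_succ`, `fs_wpq_limit`,
`fs_wpq_zero`). Hence the first coordinate never increases; while it is unchanged the second one
does not increase, and whenever it drops the second one is reset to `k + 1` and can only decrease
until the next drop. So the disjunction is an invariant of the iteration (`fund_wpq`), and it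
transfers to `(p', q')` because the notation `ω·p + q` determines `p` and `q` (`wpq_injective`).
-/

namespace Paper

/-- The ordinal `ω·p + q` below `ω²`. -/
def wpq (p q : ℕ) : ONote := ONote.omega * ONote.ofNat p + ONote.ofNat q

theorem wpq_zero_zero : wpq 0 0 = ONote.zero := rfl

theorem wpq_zero_succ (q : ℕ) : wpq 0 (q + 1) = ONote.oadd 0 q.succPNat 0 := rfl

theorem wpq_succ_zero (p : ℕ) : wpq (p + 1) 0 = ONote.oadd 1 p.succPNat 0 := by
  have h : ONote.omega * ONote.ofNat (p + 1) = ONote.oadd 1 (1 * p.succPNat) 0 := rfl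
  rw [wpq, h, one_mul]
  rfl

theorem wpq_succ_succ (p q : ℕ) :
    wpq (p + 1) (q + 1) = ONote.oadd 1 p.succPNat (ONote.oadd 0 q.succPNat 0) := by
  have h : ONote.omega * ONote.ofNat (p + 1) = ONote.oadd 1 (1 * p.succPNat) 0 := rfl
  rw [wpq, h, one_mul]
  rfl

theorem wpq_injective {p q p' q' : ℕ} (h : wpq p q = wpq p' q') : p = p' ∧ q = q' := by
  have h10 : (1 : ONote) ≠ 0 := by decide
  rcases p with _ | p <;> rcases q with _ | q <;> rcases p' with _ | p' <;>
    rcases q' with _ | q' <;>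
    simp only [wpq_zero_zero, wpq_zero_succ, wpq_succ_zero, wpq_succ_succ] at h <;>
    simp_all [ONote.zero_def, Nat.succPNat_inj]

theorem fs_wpq_zero (k : ℕ) : fs (wpq 0 0) k = wpq 0 0 := by
  rw [wpq_zero_zero, fs]

theorem fs_wpq_succ (p q k : ℕ) : fs (wpq p (q + 1)) k = wpq p q := by
  rcases p with _ | p
  · rw [wpq_zero_succ]
    rcases q with _ | q <;> rfl
  · rw [wpq_succ_succ]
    rcases q with _ | q
    · rw [wpq_succ_zero]; rfl
    · rw [wpq_succ_succ]; rfl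

theorem fs_wpq_limit (p k : ℕ) : fs (wpq (p + 1) 0) k = wpq p (k + 1) := by
  rw [wpq_succ_zero]
  rcases p with _ | p
  · rfl
  · rw [wpq_succ_succ]
    -- The coefficient produced by `fs` is `max (p + 2 - 1) 1`.
    have hm : (⟨max ((p + 1).succPNat - 1 : ℕ) 1, by omega⟩ : ℕ+) = p.succPNat := by
      apply PNat.eq
      simp
    rw [← hm]
    rfl

/-- The invariant of the iteration: every iterate is again of the form `ω·p' + q'`, with the
claimed bounds on `p'` and `q'`. -/
theorem fund_wpq (p q k y : ℕ) : ∃ p' q', fund (wpq p q) k y = wpq p' q' ∧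
    ((p' = p ∧ q' ≤ q) ∨ (p' < p ∧ q' ≤ k + 1)) := by
  induction y with
  | zero => exact ⟨p, q, rfl, Or.inl ⟨rfl, le_rfl⟩⟩
  | succ y ih =>
    obtain ⟨a, b, hab, hb⟩ := ih
    rw [fund, hab]
    rcases b with _ | b
    · rcases a with _ | a
      · exact ⟨0, 0, fs_wpq_zero k, hb⟩
      · exact ⟨a, k + 1, fs_wpq_limit a k, by omega⟩
    · exact ⟨a, b, fs_wpq_succ a b k, by omega⟩

/-- If `ω·p+q ↘ₖ ω·p'+q'` then either `p' = p` and `q' ≤ q`,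
or else `p' < p` and `q' ≤ k+1`. -/
theorem step_below_omega_sq (p q p' q' k : ℕ)
    (h : Step (wpq p q) k (wpq p' q')) :
    (p' = p ∧ q' ≤ q) ∨ (p' < p ∧ q' ≤ k + 1) := by
  obtain ⟨x, y, -, hy⟩ := h
  obtain ⟨a, b, hab, hb⟩ := fund_wpq p q k y
  obtain ⟨rfl, rfl⟩ := wpq_injective (hab.symm.trans hy)
  exact hb

end Paper
end

section
/- Let α, β < ε₀ and let k ≥ 2 be a natural number. If β ↘ₖ α+1, then ω^β ↘ₖ ω^α·2+1 and ω^β ↘ₖ ω^α+1. If β ↘ₖ α+2, then ω^β ↘ₖ ω^α+2. -/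
/-! `ω^β` follows the descent of `β`: a limit step of `β` is copied in the exponent, and a
successor step `δ+1 ↦ δ` turns `ω^(δ+1)` into `ω^δ·(k+1)`, whose surplus copies of `ω^δ` can be
removed because every notation descends to `0`.  So `β ↘ₖ α+1` gives `ω^β ↘ₖ ω^(α+1)`, and the next
step is `ω^α·(k+1)`, which descends to `ω^α·3` since `k ≥ 2`.  For `α ≠ 0` the last copy of `ω^α`
is then broken up: `ω^α` descends to `2`, hence also to `1` and `0` (`step_two`), which yields all
three targets.  For `α = 0` the descent just counts down from `3`.  Finally `α+2` descends to
`α+1` in one step, so all three claims start from `β ↘ₖ α+1`.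

Normal forms enter only in computing `α + 1` and `α + 2`; descent to `0` comes from structural
induction on the notation (`step_zero`), not from well-foundedness of the ordinals. -/

namespace Paper

open ONote

/-! ### The descent relation -/

theorem Step.refl (a : ONote) (k : ℕ) : Step a k a := ⟨0, 0, le_rfl, rfl⟩

theorem step_iff {a b : ONote} {k : ℕ} : Step a k b ↔ ∃ y, fund a k y = b :=
  ⟨fun ⟨_, y, _, h⟩ => ⟨y, h⟩, fun ⟨y, h⟩ => ⟨y, y, le_rfl, h⟩⟩

theorem fund_add_s16 (a : ONote) (k x y : ℕ) : fund a k (x + y) = fund (fund a k x) k y := by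
  induction y with
  | zero => rfl
  | succ y ih => rw [← Nat.add_assoc]; simp only [fund, ih]

theorem fund_succ' (a : ONote) (k x : ℕ) : fund a k (x + 1) = fund (fs a k) k x := by
  rw [Nat.add_comm, fund_add_s16]; rfl

theorem Step.trans {a b c : ONote} {k : ℕ} (h : Step a k b) (h' : Step b k c) : Step a k c := by
  obtain ⟨x, rfl⟩ := step_iff.1 h
  obtain ⟨y, rfl⟩ := step_iff.1 h'
  exact step_iff.2 ⟨x + y, fund_add_s16 _ _ _ _⟩

theorem step_fs (a : ONote) (k : ℕ) : Step a k (fs a k) := step_iff.2 ⟨1, rfl⟩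

theorem Step.of_fs {a b c : ONote} {k : ℕ} (e : fs a k = b) (h : Step b k c) : Step a k c :=
  (e ▸ step_fs a k : Step a k b).trans h

theorem Step.fs_of_ne {a b : ONote} {k : ℕ} (h : Step a k b) (hne : a ≠ b) :
    Step (fs a k) k b := by
  obtain ⟨y, hy⟩ := step_iff.1 h
  cases y with
  | zero => exact absurd hy hne
  | succ y => exact step_iff.2 ⟨y, by rw [← fund_succ', hy]⟩

/-! ### One-step computations -/

theorem fs_zero (k : ℕ) : fs 0 k = 0 := by
  show fs ONote.zero k = _
  simp [fs]

theorem fs_tail (e : ONote) (m : ℕ+) {a : ONote} (ha : a ≠ 0) (k : ℕ) :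
    fs (oadd e m a) k = oadd e m (fs a k) := by
  cases a with
  | zero => exact absurd rfl ha
  | oadd e' m' a' => rw [fs]

theorem fs_nat (m : ℕ+) (k : ℕ) : fs (oadd 0 (m + 1) 0) k = oadd 0 m 0 := by
  show fs (oadd ONote.zero (m + 1) ONote.zero) k = _
  rw [fs]
  obtain ⟨m, hm⟩ := m
  obtain ⟨m, rfl⟩ := Nat.exists_eq_succ_of_ne_zero hm.ne'
  simp [ofNat]; rfl

theorem fs_one (k : ℕ) : fs (oadd 0 1 0) k = 0 := by
  show fs (oadd ONote.zero 1 ONote.zero) k = _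
  rw [fs]; rfl

theorem fs_pow_succ {e p : ONote} (h : pred? e = some p) (k : ℕ) :
    fs (oadd e 1 0) k = oadd p ⟨k + 1, k.succ_pos⟩ 0 := by
  show fs (oadd e 1 ONote.zero) k = _
  cases e with
  | zero => simp [pred?] at h
  | oadd e' m' a' => rw [fs]; simp [h]

theorem fs_pow_limit {e : ONote} (h : pred? e = none) (he : e ≠ 0) (k : ℕ) :
    fs (oadd e 1 0) k = oadd (fs e k) 1 0 := by
  show fs (oadd e 1 ONote.zero) k = _
  cases e with
  | zero => exact absurd rfl he
  | oadd e' m' a' => rw [fs]; simp [h]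

theorem fs_coeff {e : ONote} (he : e ≠ 0) (m : ℕ+) (k : ℕ) :
    fs (oadd e (m + 1) 0) k = oadd e m (fs (oadd e 1 0) k) := by
  show fs (oadd e (m + 1) ONote.zero) k = oadd e m (fs (oadd e 1 ONote.zero) k)
  cases e with
  | zero => exact absurd rfl he
  | oadd e' m' a' =>
    have h : (⟨max (((m + 1 : ℕ+) : ℕ) - 1) 1, by omega⟩ : ℕ+) = m := by
      apply PNat.eq
      have := m.pos
      simp
      omega
    rw [fs, fs]
    simp only [h]
    simp

theorem fs_of_pred {e p : ONote} (h : pred? e = some p) (k : ℕ) : fs e k = p := by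
  induction e generalizing p with
  | zero => simp [pred?] at h
  | oadd e m a _ ih =>
    cases a with
    | zero =>
      cases e with
      | zero =>
        rw [pred?] at h
        rw [fs]
        simpa using h
      | oadd e' m' a' =>
        rw [pred?, if_neg (by rintro ⟨⟩)] at h
        cases h
    | oadd e' m' a' =>
      rw [pred?] at h
      obtain ⟨q, hq, rfl⟩ := Option.map_eq_some_iff.1 h
      rw [fs, ih hq]

theorem fs_ne_zero {e : ONote} (h : pred? e = none) (he : e ≠ 0) (k : ℕ) : fs e k ≠ 0 := by
  cases e with
  | zero => exact absurd rfl he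
  | oadd e m a =>
    cases a with
    | oadd e' m' a' => rw [fs]; rintro ⟨⟩
    | zero =>
      cases e with
      | zero => exact absurd h (by rw [pred?]; exact Option.some_ne_none _)
      | oadd e' m' a' =>
        have he' : oadd e' m' a' ≠ 0 := by rintro ⟨⟩
        show fs (oadd (oadd e' m' a') m 0) k ≠ 0
        induction m using PNat.recOn with
        | one =>
          cases hp : pred? (oadd e' m' a') with
          | none => rw [fs_pow_limit hp he']; rintro ⟨⟩
          | some p => rw [fs_pow_succ hp]; rintro ⟨⟩
        | succ m _ => rw [fs_coeff he']; rintro ⟨⟩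

/-! ### Descent below a fixed leading term -/

theorem Step.tail (e : ONote) (m : ℕ+) {a b : ONote} {k : ℕ} (h : Step a k b) :
    Step (oadd e m a) k (oadd e m b) := by
  obtain ⟨y, hy⟩ := step_iff.1 h
  clear h
  induction y generalizing a with
  | zero => cases hy; exact Step.refl _ _
  | succ y ih =>
    rw [fund_succ'] at hy
    by_cases ha : a = 0
    · subst ha
      rw [fs_zero] at hy
      exact ih hy
    · exact Step.of_fs (fs_tail e m ha k) (ih hy)

/-- Breaking up the last copy of `ω^e` in `ω^e·(m+1)`. -/
theorem step_coeff {e c : ONote} (he : e ≠ 0) (m : ℕ+) {k : ℕ}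
    (h : Step (oadd e 1 0) k c) (hne : oadd e 1 0 ≠ c) :
    Step (oadd e (m + 1) 0) k (oadd e m c) :=
  Step.of_fs (fs_coeff he m k) ((h.fs_of_ne hne).tail e m)

theorem step_drop_of {e : ONote} {k : ℕ} (h : Step (oadd e 1 0) k 0) (m : ℕ+) :
    Step (oadd e (m + 1) 0) k (oadd e m 0) := by
  by_cases he : e = 0
  · subst he
    exact Step.of_fs (fs_nat m k) (Step.refl _ _)
  · exact step_coeff he m h (by rintro ⟨⟩)

theorem step_mul_of {e : ONote} {k : ℕ} (h : Step (oadd e 1 0) k 0) (m : ℕ+) :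
    Step (oadd e m 0) k (oadd e 1 0) := by
  induction m using PNat.recOn with
  | one => exact Step.refl _ _
  | succ m ih => exact (step_drop_of h m).trans ih

/-- If the exponent `e` descends to `0`, so does `ω^e`; induction on the length of the descent
of `e`. -/
theorem step_pow_zero {e : ONote} {k x : ℕ} (h : fund e k x = 0) : Step (oadd e 1 0) k 0 := by
  have h0 : Step (oadd 0 1 0) k 0 := Step.of_fs (fs_one k) (Step.refl _ _)
  induction x generalizing e with
  | zero => cases h; exact h0
  | succ x ih =>
    rw [fund_succ'] at h
    by_cases he : e = 0
    · subst he; exact h0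
    cases hp : pred? e with
    | none => exact Step.of_fs (fs_pow_limit hp he k) (ih h)
    | some p =>
      rw [fs_of_pred hp] at h
      exact Step.of_fs (fs_pow_succ hp k) ((step_mul_of (ih h) _).trans (ih h))

theorem step_zero (a : ONote) (k : ℕ) : Step a k 0 := by
  induction a with
  | zero => exact Step.refl _ _
  | oadd e m a ihe iha =>
    obtain ⟨x, hx⟩ := step_iff.1 ihe
    have h := step_pow_zero hx
    exact (iha.tail e m).trans ((step_mul_of h m).trans h)

theorem step_drop (e : ONote) (m : ℕ+) (k : ℕ) : Step (oadd e (m + 1) 0) k (oadd e m 0) :=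
  step_drop_of (step_zero _ k) m

theorem step_drop_le (e : ONote) {m n : ℕ+} (h : m ≤ n) (k : ℕ) :
    Step (oadd e n 0) k (oadd e m 0) := by
  induction n using PNat.recOn with
  | one => rw [le_antisymm h one_le]; exact Step.refl _ _
  | succ n ih =>
    rcases h.eq_or_lt with rfl | h
    · exact Step.refl _ _
    · exact (step_drop e n k).trans (ih (PNat.lt_add_one_iff.1 h))

/-- For `e ≠ 0` the descent of `ω^e` passes through `2`, because the exponent descends to
`1` and `ω` steps to `k + 1 ≥ 2`. -/
theorem step_two {e : ONote} (he : e ≠ 0) {k : ℕ} (hk : 2 ≤ k) :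
    Step (oadd e 1 0) k (oadd 0 2 0) := by
  obtain ⟨x, hx⟩ := step_iff.1 (step_zero e k)
  induction x generalizing e with
  | zero => exact absurd hx he
  | succ x ih =>
    rw [fund_succ'] at hx
    cases hp : pred? e with
    | none => exact Step.of_fs (fs_pow_limit hp he k) (ih (fs_ne_zero hp he k) hx)
    | some p =>
      rw [fs_of_pred hp] at hx
      refine Step.of_fs (fs_pow_succ hp k) ?_
      by_cases h0 : p = 0
      · subst h0
        refine step_drop_le 0 (PNat.coe_le_coe _ _ |>.1 ?_) k
        show 2 ≤ k + 1
        omega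
      · exact (step_mul_of (step_zero _ k) _).trans (ih h0 hx)

/-- `ω^(·)` is monotone along descents. -/
theorem Step.pow {a b : ONote} {k : ℕ} (h : Step a k b) :
    Step (oadd a 1 0) k (oadd b 1 0) := by
  obtain ⟨y, hy⟩ := step_iff.1 h
  clear h
  induction y generalizing a with
  | zero => cases hy; exact Step.refl _ _
  | succ y ih =>
    rw [fund_succ'] at hy
    by_cases ha : a = 0
    · subst ha
      rw [fs_zero] at hy
      exact ih hy
    cases hp : pred? a with
    | none => exact Step.of_fs (fs_pow_limit hp ha k) (ih hy)
    | some p =>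
      rw [fs_of_pred hp] at hy
      exact Step.of_fs (fs_pow_succ hp k) ((step_mul_of (step_zero _ k) _).trans (ih hy))

/-! ### Sums with small natural numbers -/

theorem one_eq : (1 : ONote) = oadd 0 1 0 := rfl

theorem two_eq : (2 : ONote) = oadd 0 2 0 := rfl

/-- Adding `1` below a nonzero exponent appends a new last term; it is merged into the last term
otherwise.  The second conjunct, that the leading exponent is unchanged, carries the induction. -/
theorem pred_add_one {a : ONote} (ha : a.NF) :
    pred? (a + 1) = some a ∧ ∀ e m b, a = oadd e m b → ∃ m' b', a + 1 = oadd e m' b' := by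
  induction a with
  | zero => exact ⟨rfl, fun _ _ _ h => by cases h⟩
  | oadd e m a _ ih =>
    have hsum : oadd e m a + 1 = addAux e m (a + 1) := rfl
    cases a with
    | zero =>
      have h1 : ONote.zero + (1 : ONote) = oadd 0 1 0 := rfl
      by_cases he : e = 0
      · subst he
        have : oadd 0 m ONote.zero + 1 = oadd 0 (m + 1) 0 := rfl
        rw [this]
        refine ⟨?_, fun _ _ _ h => by cases h; exact ⟨_, _, rfl⟩⟩
        show pred? (oadd 0 (m + 1) ONote.zero) = _
        rw [pred?, if_pos rfl]
        obtain ⟨m, hm⟩ := m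
        obtain ⟨m, rfl⟩ := Nat.exists_eq_succ_of_ne_zero hm.ne'
        simp [ofNat]; rfl
      · have : oadd e m ONote.zero + 1 = oadd e m (oadd 0 1 0) := by
          cases e with
          | zero => exact absurd rfl he
          | oadd => rfl
        rw [this]
        exact ⟨rfl, fun _ _ _ h => by cases h; exact ⟨_, _, rfl⟩⟩
    | oadd e' m' a' =>
      obtain ⟨hp, hh⟩ := ih ha.snd
      obtain ⟨m'', b'', hb⟩ := hh _ _ _ rfl
      have hlt : e' < e := (ha.snd').lt
      have hcmp : ONote.cmp e e' = Ordering.gt := by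
        have := ha.fst
        have := ha.snd.fst
        have := ONote.cmp_compares e e'
        cases hc : ONote.cmp e e' with
        | gt => rfl
        | lt => rw [hc] at this; exact absurd (lt_trans this hlt) (lt_irrefl _)
        | eq => rw [hc] at this; cases this; exact absurd hlt (lt_irrefl _)
      have : oadd e m (oadd e' m' a') + 1 = oadd e m (oadd e' m' a' + 1) := by
        rw [hsum, hb]
        simp only [addAux, hcmp]
      rw [this]
      refine ⟨?_, fun _ _ _ h => by cases h; exact ⟨_, _, rfl⟩⟩
      rw [hb] at hp ⊢
      rw [pred?, hp]
      rfl

theorem add_one_add_one {a : ONote} (ha : a.NF) : a + 1 + 1 = a + 2 := by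
  have := ha
  have : NF 2 := ONote.nf_ofNat 2
  rw [← ONote.repr_inj]
  have h2 : ONote.repr 2 = 2 := ONote.repr_ofNat 2
  simp [h2, add_assoc, one_add_one_eq_two]

theorem omega_pow_add_nat {e : ONote} (he : e ≠ 0) (m : ℕ+) (j : ℕ+) :
    oadd e m 0 + oadd 0 j 0 = oadd e m (oadd 0 j 0) := by
  cases e with
  | zero => exact absurd rfl he
  | oadd => rfl

/-- For `k ≥ 2`: if `β ↘ₖ α+1` then `ω^β ↘ₖ ω^α·2+1` and `ω^β ↘ₖ ω^α+1`;
if `β ↘ₖ α+2` then `ω^β ↘ₖ ω^α+2`. -/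
theorem step_omega_pow_shift (α β : ONote) (hα : α.NF) (hβ : β.NF)
    (k : ℕ) (hk : 2 ≤ k) :
    (Step β k (α + 1) →
      Step (ONote.oadd β 1 0) k (ONote.oadd α 1 0 * ONote.ofNat 2 + 1) ∧
        Step (ONote.oadd β 1 0) k (ONote.oadd α 1 0 + 1)) ∧
    (Step β k (α + 2) →
      Step (ONote.oadd β 1 0) k (ONote.oadd α 1 0 + 2)) := by
  have hthree : Step β k (α + 1) → Step (oadd β 1 0) k (oadd α 3 0) := fun h => by
    refine h.pow.trans (Step.of_fs (fs_pow_succ (pred_add_one hα).1 k) ?_)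
    refine step_drop_le α (PNat.coe_le_coe _ _ |>.1 ?_) k
    show 3 ≤ k + 1
    omega
  have hdown : Step β k (α + 2) → Step β k (α + 1) := fun h => by
    have := hα
    refine h.trans (Step.of_fs ?_ (Step.refl _ _))
    rw [← add_one_add_one hα]
    exact fs_of_pred (pred_add_one inferInstance).1 k
  have hmul : oadd α 1 0 * ofNat 2 = oadd α 2 0 := rfl
  have h32 : Step (oadd α 3 0) k (oadd α 2 0) := step_drop α 2 k
  rw [hmul, one_eq, two_eq]
  by_cases h0 : α = 0
  · subst h0
    exact ⟨fun h => ⟨hthree h, (hthree h).trans h32⟩, fun h => hthree (hdown h)⟩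
  · have hto2 := step_two h0 hk
    have hto1 : Step (oadd α 1 0) k (oadd 0 1 0) := hto2.trans (step_drop 0 1 k)
    have hne : ∀ j, oadd α 1 0 ≠ oadd 0 j 0 := fun j h => by
      cases h
      exact h0 rfl
    rw [omega_pow_add_nat h0, omega_pow_add_nat h0, omega_pow_add_nat h0]
    exact ⟨fun h => ⟨(hthree h).trans (step_coeff h0 2 hto1 (hne _)),
      ((hthree h).trans h32).trans (step_coeff h0 1 hto1 (hne _))⟩,
      fun h => ((hthree (hdown h)).trans h32).trans (step_coeff h0 1 hto2 (hne _))⟩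

end Paper
end

section
/- Let α, β < ε₀ with α ↘ₙ β, and write e(γ) for the exponent of the leading summand of the Cantor normal form of γ (with e(0)=0). Then for every natural number y: α ↘ₙʸ e(fund(ω^α,n,y)), and moreover either ω^α ↘ₙʸ ω^β or fund(ω^α,n,y) > ω^β. -/
/-!
The leading exponents met along the descent from `ω^α` are the iterates of `α`, in order. From
`ω^e·m + a` with `e ≠ 0`, steps of `{·}(n)` act on the tail `a` or lower `m` without touching
`e`, until the value is exactly `ω^e`; only then does the exponent change, and both the successor and the limit
clause change it to `{e}(n)`, giving `ω^({e}(n))·c` (`fs_oadd_zero`). Hence the exponent cannot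
leave `fund α n j` without visiting `ω^(fund α n j)` (`fund_opow_invariant`).

Given `β = fund α n x` and current exponent `fund α n k`, either `x < k` and `ω^β` has been
visited, or `x ≥ k` and `β` is `fund α n k` or strictly below it (`fund_eq_or_lt`, from
`fs_lt`). Then `ω^β` is at most the current value, with equality only if that value is literally
`ω^β`.
-/

namespace Paper

/-- The exponent of the leading summand of the Cantor normal form (`lead 0 = 0`). -/
def lead : ONote → ONote
  | ONote.zero => ONote.zero
  | ONote.oadd e _ _ => e

/-- On successors the fundamental sequence is the predecessor, for every `n`. -/
theorem fs_eq_of_pred? (n : ℕ) : ∀ o p : ONote, pred? o = some p → fs o n = p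
  | ONote.zero, p, h => by simp [pred?] at h
  | ONote.oadd e m (ONote.oadd e' m' a'), p, h => by
    rw [pred?, Option.map_eq_some_iff] at h
    obtain ⟨q, hq, rfl⟩ := h
    rw [fs, fs_eq_of_pred? n _ q hq]
  | ONote.oadd (ONote.oadd e1 m1 a1) m ONote.zero, p, h => by
    have he : ONote.oadd e1 m1 a1 ≠ 0 := fun h => by cases h
    simp [pred?, he] at h
  | ONote.oadd ONote.zero m ONote.zero, p, h => by
    have he : ONote.zero = 0 := rfl
    rw [pred?, if_pos he] at h
    rw [fs]
    exact Option.some.inj h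

/-- For `e ≠ 0`, the successor and limit clauses of `{ω^e·m}(n)` have the common form
`ω^e·(m-1) + ω^({e}(n))·c`, with `c = n + 1` or `c = 1`. -/
theorem fs_oadd_zero {e : ONote} (he : e ≠ 0) (m : ℕ+) (n : ℕ) :
    ∃ c : ℕ+, (m = 1 ∧ fs (ONote.oadd e m 0) n = ONote.oadd (fs e n) c 0) ∨
      ∃ m' : ℕ+, (m' : ℕ) + 1 = m ∧
        fs (ONote.oadd e m 0) n = ONote.oadd e m' (ONote.oadd (fs e n) c 0) := by
  obtain _ | ⟨e1, m1, a1⟩ := e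
  · exact absurd rfl he
  have tail : ∃ c : ℕ+, (match pred? (ONote.oadd e1 m1 a1) with
      | some p => ONote.oadd p ⟨n + 1, n.succ_pos⟩ ONote.zero
      | none => ONote.oadd (fs (ONote.oadd e1 m1 a1) n) 1 ONote.zero)
        = ONote.oadd (fs (ONote.oadd e1 m1 a1) n) c 0 := by
    cases hp : pred? (ONote.oadd e1 m1 a1) with
    | none => exact ⟨1, rfl⟩
    | some p => exact ⟨_, by rw [fs_eq_of_pred? n _ p hp]; rfl⟩
  obtain ⟨c, hc⟩ := tail
  refine ⟨c, ?_⟩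
  change _ ∧ fs (ONote.oadd _ m ONote.zero) n = _ ∨
    ∃ m' : ℕ+, _ ∧ fs (ONote.oadd _ m ONote.zero) n = _
  simp only [fs]
  rw [hc]
  by_cases hm : (m : ℕ) = 1
  · exact Or.inl ⟨PNat.coe_eq_one_iff.mp hm, if_pos hm⟩
  · have := m.pos
    exact Or.inr ⟨_, by simp only [PNat.mk_coe]; omega, if_neg hm⟩

theorem fs_zero_exp (m : ℕ+) (n : ℕ) :
    (m = 1 ∧ fs (ONote.oadd 0 m 0) n = 0) ∨
      ∃ m' : ℕ+, (m' : ℕ) + 1 = m ∧ fs (ONote.oadd 0 m 0) n = ONote.oadd 0 m' 0 := by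
  change _ ∧ fs (ONote.oadd ONote.zero m ONote.zero) n = _ ∨
    ∃ m' : ℕ+, _ ∧ fs (ONote.oadd ONote.zero m ONote.zero) n = _
  simp only [fs]
  obtain ⟨k, hk⟩ : ∃ k, (m : ℕ) = k + 1 := ⟨m - 1, by have := m.pos; omega⟩
  rw [hk, Nat.add_sub_cancel]
  obtain _ | k := k
  · exact Or.inl ⟨PNat.coe_eq_one_iff.mp hk, rfl⟩
  · exact Or.inr ⟨k.succPNat, rfl, rfl⟩

theorem repr_oadd (e : ONote) (m : ℕ+) (a : ONote) :
    (ONote.oadd e m a).repr = Ordinal.omega0 ^ e.repr * (m : ℕ) + a.repr := rfl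

theorem opow_le_repr_oadd (e : ONote) (m : ℕ+) (a : ONote) :
    Ordinal.omega0 ^ e.repr ≤ (ONote.oadd e m a).repr := ONote.omega0_le_oadd e m a

theorem repr_pos : ∀ {a : ONote}, a ≠ 0 → 0 < a.repr
  | ONote.zero, h => absurd rfl h
  | ONote.oadd e m a, _ =>
    (Ordinal.opow_pos _ Ordinal.omega0_pos).trans_le (opow_le_repr_oadd e m a)

theorem fs_lt_s19 (n : ℕ) (α : ONote) (hα : α ≠ 0) : fs α n < α := by
  induction α with
  | zero => exact absurd rfl hα
  | oadd e m a ihe iha =>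
    rw [ONote.lt_def]
    obtain _ | ⟨e', m', a'⟩ := a
    · by_cases he : e = 0
      · subst he
        change (fs (ONote.oadd 0 m 0) n).repr < (ONote.oadd 0 m 0).repr
        obtain ⟨-, h⟩ | ⟨m', hm, h⟩ := fs_zero_exp m n
        · rw [h]
          exact repr_pos hα
        · rw [h, repr_oadd, repr_oadd, ← hm]
          simp
      · have hlt : ∀ c : ℕ+, (ONote.oadd (fs e n) c 0).repr < Ordinal.omega0 ^ e.repr := by
          intro c
          rw [repr_oadd]
          simpa using Ordinal.opow_mul_lt_opow (Ordinal.natCast_lt_omega0 c) (ONote.lt_def.mp (ihe he))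
        change (fs (ONote.oadd e m 0) n).repr < (ONote.oadd e m 0).repr
        obtain ⟨c, ⟨-, h⟩ | ⟨m', hm, h⟩⟩ := fs_oadd_zero he m n
        · rw [h]
          exact (hlt c).trans_le (opow_le_repr_oadd _ _ _)
        · rw [h, repr_oadd e m', repr_oadd e m, ← hm, Nat.cast_add, Nat.cast_one, mul_add, mul_one,
            add_assoc]
          gcongr
          simpa using hlt c
    · have h := iha (fun h => by cases h)
      rw [fs, repr_oadd, repr_oadd]
      exact add_lt_add_right (ONote.lt_def.mp h) _

/-- Monotonicity of the descent. The first alternative is equality of notations, not just of the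
ordinals they denote, so no normal-form bookkeeping is needed to compare `β` with an iterate. -/
theorem fund_eq_or_lt (α : ONote) (n k d : ℕ) :
    fund α n (k + d) = fund α n k ∨ fund α n (k + d) < fund α n k := by
  induction d with
  | zero => exact Or.inl rfl
  | succ d ih =>
    change fs (fund α n (k + d)) n = _ ∨ fs (fund α n (k + d)) n < _
    by_cases h0 : fund α n (k + d) = 0
    · have hfs : fs (fund α n (k + d)) n = fund α n (k + d) := by rw [h0]; rfl
      rwa [hfs]
    · have hlt := fs_lt_s19 n _ h0
      obtain h | h := ih
      · rw [h] at hlt ⊢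
        exact Or.inr hlt
      · exact Or.inr (hlt.trans h)

theorem StepAt.mono {α β : ONote} {n x x' : ℕ} (h : StepAt α n x β) (hx : x ≤ x') :
    StepAt α n x' β :=
  let ⟨y, hy, e⟩ := h
  ⟨y, hy.trans hx, e⟩

/-- The invariant of the descent from `ω^α`: after `y` steps the leading exponent is
`fund α n k` for some `k ≤ y`, and `ω^(fund α n j)` has been visited for each `j < k`. The value
`0` is reached only after `ω^0`, when the exponents have themselves come down to `0`. -/
theorem fund_opow_invariant (α : ONote) (n y : ℕ) :
    ∃ k ≤ y, lead (fund (ONote.oadd α 1 0) n y) = fund α n k ∧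
      (∀ j < k, StepAt (ONote.oadd α 1 0) n y (ONote.oadd (fund α n j) 1 0)) ∧
      (fund (ONote.oadd α 1 0) n y = 0 →
        StepAt (ONote.oadd α 1 0) n y (ONote.oadd (fund α n k) 1 0)) := by
  induction y with
  | zero => exact ⟨0, le_rfl, rfl, fun j hj => by omega, fun h => by cases h⟩
  | succ y ih =>
    obtain ⟨k, hk, hlead, hvis, hzero⟩ := ih
    have hvis' : ∀ j < k, StepAt (ONote.oadd α 1 0) n (y + 1) (ONote.oadd (fund α n j) 1 0) :=
      fun j hj => (hvis j hj).mono y.le_succ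
    rw [show fund (ONote.oadd α 1 0) n (y + 1) = fs (fund (ONote.oadd α 1 0) n y) n from rfl]
    obtain hs | ⟨e, m, a, hs⟩ : fund (ONote.oadd α 1 0) n y = 0 ∨
        ∃ e m a, fund (ONote.oadd α 1 0) n y = ONote.oadd e m a := by
      cases fund (ONote.oadd α 1 0) n y with
      | zero => exact Or.inl rfl
      | oadd e m a => exact Or.inr ⟨e, m, a, rfl⟩
    · refine ⟨k, by omega, ?_, hvis', fun _ => (hzero hs).mono y.le_succ⟩
      rw [← hlead, hs]
      rfl
    · rw [hs] at hlead ⊢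
      obtain rfl : e = fund α n k := hlead
      obtain _ | ⟨e', m', a'⟩ := a
      · change fund (ONote.oadd α 1 0) n y = ONote.oadd (fund α n k) m 0 at hs
        change ∃ k' ≤ y + 1, lead (fs (ONote.oadd (fund α n k) m 0) n) = _ ∧ _ ∧
          (fs (ONote.oadd (fund α n k) m 0) n = 0 → _)
        by_cases he : fund α n k = 0
        · refine ⟨k, by omega, ?_, hvis', ?_⟩
          · rw [he]
            obtain ⟨-, h⟩ | ⟨m', -, h⟩ := fs_zero_exp m n <;> rw [h] <;> rfl
          · intro h0
            obtain ⟨rfl, -⟩ | ⟨m', -, h⟩ := fs_zero_exp m n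
            · exact ⟨y, y.le_succ, hs⟩
            · rw [he, h] at h0
              cases h0
        · obtain ⟨c, ⟨rfl, h⟩ | ⟨m', -, h⟩⟩ := fs_oadd_zero he m n
          -- From `ω^e` itself the leading exponent drops to `{e}(n)`, and `ω^e` counts as visited.
          · refine ⟨k + 1, by omega, by rw [h]; rfl, fun j hj => ?_, fun h0 => ?_⟩
            · obtain hj | rfl := Nat.lt_succ_iff_lt_or_eq.mp hj
              · exact hvis' j hj
              · exact ⟨y, y.le_succ, hs⟩
            · rw [h] at h0
              cases h0
          · refine ⟨k, by omega, by rw [h]; rfl, hvis', fun h0 => ?_⟩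
            rw [h] at h0
            cases h0
      · refine ⟨k, by omega, by rw [fs]; rfl, hvis', fun h0 => ?_⟩
        rw [fs] at h0
        cases h0

theorem opow_lt_oadd {b e : ONote} (h : b < e) (m : ℕ+) (a : ONote) :
    ONote.oadd b 1 0 < ONote.oadd e m a := by
  rw [ONote.lt_def, repr_oadd b]
  refine lt_of_lt_of_le ?_ (opow_le_repr_oadd e m a)
  simpa using Ordinal.opow_mul_lt_opow (Ordinal.natCast_lt_omega0 1) (ONote.lt_def.mp h)

theorem opow_eq_or_lt_oadd (e : ONote) (m : ℕ+) (a : ONote) :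
    ONote.oadd e m a = ONote.oadd e 1 0 ∨ ONote.oadd e 1 0 < ONote.oadd e m a := by
  by_cases ha : a = 0
  · by_cases hm : m = 1
    · exact Or.inl (by rw [ha, hm])
    · right
      have hm' : 1 < (m : ℕ) := by
        have := m.pos
        have := mt PNat.coe_eq_one_iff.mp hm
        omega
      rw [ha, ONote.lt_def, repr_oadd, repr_oadd]
      simp only [ONote.repr_zero, add_zero]
      exact mul_lt_mul_of_pos_left (by exact_mod_cast hm')
        (Ordinal.opow_pos _ Ordinal.omega0_pos)
  · right
    rw [ONote.lt_def, repr_oadd, repr_oadd]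
    refine add_lt_add_of_le_of_lt ?_ (repr_pos ha)
    gcongr
    exact_mod_cast m.pos

/-- If `α ↘ₙ β` then for every `y`: `α ↘ₙʸ e(fund(ω^α,n,y))`, and moreover either
`ω^α ↘ₙʸ ω^β` or `fund(ω^α,n,y) > ω^β`. -/
theorem step_lead_omega_pow (α β : ONote) (hα : α.NF) (hβ : β.NF) (n : ℕ)
    (h : Step α n β) (y : ℕ) :
    StepAt α n y (lead (fund (ONote.oadd α 1 0) n y)) ∧
      (StepAt (ONote.oadd α 1 0) n y (ONote.oadd β 1 0) ∨
        ONote.oadd β 1 0 < fund (ONote.oadd α 1 0) n y) := by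
  obtain ⟨k, hk, hlead, hvis, hzero⟩ := fund_opow_invariant α n y
  refine ⟨⟨k, hk, hlead.symm⟩, ?_⟩
  obtain ⟨_, x, -, rfl⟩ := h
  by_cases hxk : x < k
  · exact Or.inl (hvis x hxk)
  obtain ⟨d, rfl⟩ := Nat.exists_eq_add_of_le (not_lt.mp hxk)
  cases hs : fund (ONote.oadd α 1 0) n y with
  | zero =>
    -- Here `fund α n k = lead 0 = 0`, so no later iterate is strictly smaller.
    rw [hs] at hlead
    left
    obtain h | h := fund_eq_or_lt α n k d
    · rw [h]
      exact hzero hs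
    · rw [← hlead] at h
      exact absurd (ONote.lt_def.mp h) not_lt_zero
  | oadd e m a =>
    rw [hs] at hlead
    obtain rfl : e = fund α n k := hlead
    obtain h | h := fund_eq_or_lt α n k d
    · rw [h]
      obtain h1 | h1 := opow_eq_or_lt_oadd (fund α n k) m a
      · exact Or.inl ⟨y, le_rfl, hs.trans h1⟩
      · exact Or.inr h1
    · exact Or.inr (opow_lt_oadd h m a)

end Paper
end
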